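/- arXiv:1609.07013 — 2 statements merged into one kernel-verified Lean document; each statement's English description precedes it below -/
import Mathlib

section
/- Friedrichs-type commutator estimate for the horizontal mollifier: There is a constant C, depending only on ρ, such that for every κ > 0, every bounded Lipschitz function h : ℝ² → ℝ (with sup norm and Lipschitz constant both at most M), every smooth compactly supported g : ℝ² → ℝ, and every coordinate direction α ∈ {1,2}, the commutator satisfies ‖Λ_κ(h · ∂_α g) − h · Λ_κ(∂_α g)‖_{L²(ℝ²)} ≤ C · M · ‖g‖_{L²(ℝ²)}. The bound is uniform in κ and does not involve any derivative of g. -/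
open MeasureTheory

/-- The partial derivative in the `α`-th coordinate direction on `ℝ²`. -/
noncomputable def pd2 (α : Fin 2) (f : (Fin 2 → ℝ) → ℝ) : (Fin 2 → ℝ) → ℝ :=
  fun x => fderiv ℝ f x (Pi.single α 1)

/-- The mollification `Λ_κ g = ρ_κ * g` on `ℝ²`, where `ρ_κ (x) = κ⁻² ρ (x / κ)`. -/
noncomputable def mollify (ρ : (Fin 2 → ℝ) → ℝ) (κ : ℝ) (g : (Fin 2 → ℝ) → ℝ) :
    (Fin 2 → ℝ) → ℝ :=
  fun x => ∫ y, (κ ^ 2)⁻¹ * ρ (κ⁻¹ • (x - y)) * g y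

open scoped ENNReal NNReal

lemma fc_young (K G : (Fin 2 → ℝ) → ℝ≥0∞) (hK : Measurable K) (hG : Measurable G) :
    ∫⁻ x, (∫⁻ y, K (x - y) * G y) ^ (2 : ℝ) ≤ (∫⁻ z, K z) ^ (2 : ℝ) * ∫⁻ y, G y ^ (2 : ℝ) := by
  have hm : Measurable fun p : (Fin 2 → ℝ) × (Fin 2 → ℝ) => K (p.1 - p.2) * G p.2 ^ (2 : ℝ) := by
    fun_prop
  have h1 : ∀ x, (∫⁻ y, K (x - y) * G y) ^ (2 : ℝ) ≤
      (∫⁻ z, K z) * ∫⁻ y, K (x - y) * G y ^ (2 : ℝ) := by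
    intro x
    have hx : Measurable fun y => K (x - y) := by fun_prop
    have hx2 : Measurable fun y => K (x - y) * G y ^ (2 : ℝ) := by fun_prop
    have := ENNReal.lintegral_mul_norm_pow_le (μ := volume) hx.aemeasurable hx2.aemeasurable
      (p := 1 / 2) (q := 1 / 2) (by norm_num) (by norm_num) (by norm_num)
    have e : ∀ y, K (x - y) ^ (1 / 2 : ℝ) * (K (x - y) * G y ^ (2 : ℝ)) ^ (1 / 2 : ℝ)
        = K (x - y) * G y := by
      intro y
      rw [ENNReal.mul_rpow_of_nonneg _ _ (by norm_num), ← mul_assoc,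
        ← ENNReal.rpow_add_of_nonneg _ _ (by norm_num) (by norm_num), ← ENNReal.rpow_mul]
      norm_num
    simp only [e] at this
    calc _ ≤ _ := ENNReal.rpow_le_rpow this (by norm_num)
      _ = _ := by
        rw [ENNReal.mul_rpow_of_nonneg _ _ (by norm_num), ← ENNReal.rpow_mul, ← ENNReal.rpow_mul,
          lintegral_sub_left_eq_self (fun z => K z) x]
        norm_num
  calc _ ≤ ∫⁻ x, (∫⁻ z, K z) * ∫⁻ y, K (x - y) * G y ^ (2 : ℝ) := lintegral_mono h1
    _ = (∫⁻ z, K z) * ∫⁻ x, ∫⁻ y, K (x - y) * G y ^ (2 : ℝ) := by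
      rw [lintegral_const_mul]
      exact hm.lintegral_prod_right'
    _ = (∫⁻ z, K z) * ∫⁻ y, ∫⁻ x, K (x - y) * G y ^ (2 : ℝ) := by
      rw [lintegral_lintegral_swap hm.aemeasurable]
    _ = (∫⁻ z, K z) * ∫⁻ y, (∫⁻ z, K z) * G y ^ (2 : ℝ) := by
      congr 1
      refine lintegral_congr fun y => ?_
      rw [lintegral_mul_const _ (by fun_prop), lintegral_sub_right_eq_self (fun z => K z) y]
    _ = _ := by
      rw [lintegral_const_mul _ (by fun_prop), ← mul_assoc]
      congr 1
      rw [show (2 : ℝ) = 1 + 1 by norm_num,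
        ENNReal.rpow_add_of_nonneg _ _ (by norm_num) (by norm_num)]
      simp

lemma fc_parts (φ g H : (Fin 2 → ℝ) → ℝ) (hφ : ContDiff ℝ (⊤ : ℕ∞) φ)
    (hg : ContDiff ℝ (⊤ : ℕ∞) g) (hgc : HasCompactSupport g) (D : ℝ≥0) (hH : LipschitzWith D H)
    (v : Fin 2 → ℝ) :
    ∫ y, φ y * (H y * fderiv ℝ g y v)
      = - ∫ y, (lineDeriv ℝ H y v * φ y + H y * fderiv ℝ φ y v) * g y := by
  have hφ1 : Continuous fun y => fderiv ℝ φ y v :=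
    (hφ.continuous_fderiv (by simp)).clm_apply continuous_const
  have hg1 : Continuous fun y => fderiv ℝ g y v :=
    (hg.continuous_fderiv (by simp)).clm_apply continuous_const
  have hgc1 : HasCompactSupport fun y => fderiv ℝ g y v := hgc.fderiv_apply ℝ v
  have hHc := hH.continuous
  have hφc := hφ.continuous
  have hgcont := hg.continuous
  have hpc : HasCompactSupport (fun y => φ y * g y) := hgc.mul_left
  have hp : ContDiff ℝ (⊤ : ℕ∞) (fun y => φ y * g y) := hφ.mul hg
  obtain ⟨D', hD'⟩ := (hp.of_le (by simp : (1 : WithTop ℕ∞) ≤ _)).lipschitzWith_of_hasCompactSupport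
    hpc (by simp)
  have key := LipschitzWith.integral_lineDeriv_mul_eq (μ := volume) hH hD' hpc v
  have e : ∀ y, lineDeriv ℝ (fun y => φ y * g y) y (-v)
      = -(φ y * fderiv ℝ g y v + g y * fderiv ℝ φ y v) := by
    intro y
    have h1 : DifferentiableAt ℝ φ y := (hφ.differentiable (by simp)) y
    have h2 : DifferentiableAt ℝ g y := (hg.differentiable (by simp)) y
    rw [(h1.fun_mul h2).lineDeriv_eq_fderiv, fderiv_fun_mul h1 h2]
    simp
    ring
  simp only [e] at key
  have i1 : Integrable fun y => φ y * (H y * fderiv ℝ g y v) :=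
    Continuous.integrable_of_hasCompactSupport (by fun_prop) (hgc1.mul_left.mul_left)
  have i2 : Integrable fun y => H y * fderiv ℝ φ y v * g y :=
    Continuous.integrable_of_hasCompactSupport (by fun_prop) (hgc.mul_left)
  have i3 : Integrable fun y => lineDeriv ℝ H y v * (φ y * g y) := by
    refine Integrable.bdd_mul (c := D * ‖v‖) ?_ ?_ ?_
    · exact Continuous.integrable_of_hasCompactSupport (by fun_prop) hpc
    · exact (measurable_lineDeriv hHc).aestronglyMeasurable
    · exact Filter.Eventually.of_forall fun y => norm_lineDeriv_le_of_lipschitz ℝ hH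
  have l : ∫ y, (lineDeriv ℝ H y v * φ y + H y * fderiv ℝ φ y v) * g y
      = (∫ y, lineDeriv ℝ H y v * (φ y * g y)) + ∫ y, H y * fderiv ℝ φ y v * g y := by
    rw [← integral_add i3 i2]
    congr 1; ext y; ring
  have r : ∫ y, -(φ y * fderiv ℝ g y v + g y * fderiv ℝ φ y v) * H y
      = -((∫ y, φ y * (H y * fderiv ℝ g y v)) + ∫ y, H y * fderiv ℝ φ y v * g y) := by
    rw [← integral_add i1 i2, ← integral_neg]
    congr 1; ext y; ring
  rw [l, key, r]; ring

lemma fc_kernel_int (K : (Fin 2 → ℝ) → ℝ) (hK : ∀ z, 0 ≤ K z) (hi : Integrable K)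
    (κ : ℝ) (hκ : 0 < κ) :
    ∫⁻ z, ENNReal.ofReal ((κ ^ 2)⁻¹ * K (κ⁻¹ • z)) = ENNReal.ofReal (∫ z, K z) := by
  rw [← ofReal_integral_eq_lintegral_ofReal]
  · rw [integral_const_mul, Measure.integral_comp_inv_smul_of_nonneg _ _ hκ.le]
    simp
    field_simp
  · exact (hi.comp_smul (by positivity)).const_mul _
  · exact Filter.Eventually.of_forall fun z => mul_nonneg (by positivity) (hK _)

lemma fc_pointwise (ρ : (Fin 2 → ℝ) → ℝ) (hρ : ContDiff ℝ (⊤ : ℕ∞) ρ) (hρnn : ∀ x, 0 ≤ ρ x)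
    (κ : ℝ) (hκ : 0 < κ) (M : ℝ) (hM : 0 ≤ M) (h : (Fin 2 → ℝ) → ℝ)
    (hh : LipschitzWith (Real.toNNReal M) h) (g : (Fin 2 → ℝ) → ℝ)
    (hg : ContDiff ℝ (⊤ : ℕ∞) g) (hgc : HasCompactSupport g) (α : Fin 2) (x : Fin 2 → ℝ) :
    ‖mollify ρ κ (fun y => h y * pd2 α g y) x - h x * mollify ρ κ (pd2 α g) x‖ₑ ≤
      ∫⁻ y, ENNReal.ofReal (M * ((κ ^ 2)⁻¹ * (‖κ⁻¹ • (x - y)‖ * ‖fderiv ℝ ρ (κ⁻¹ • (x - y))‖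
        + ρ (κ⁻¹ • (x - y))))) * ‖g y‖ₑ := by
  set v : Fin 2 → ℝ := Pi.single α 1 with hv
  have hvn : ‖v‖ = 1 := by rw [hv, Pi.norm_single]; simp
  set φ : (Fin 2 → ℝ) → ℝ := fun y => (κ ^ 2)⁻¹ * ρ (κ⁻¹ • (x - y)) with hφd
  have hφ : ContDiff ℝ (⊤ : ℕ∞) φ := by
    refine contDiff_const.mul (hρ.comp ?_)
    fun_prop
  have hH : LipschitzWith (Real.toNNReal M) (fun y => h y - h x) := by
    intro a b
    simpa [edist_sub_right] using hh a b
  have hd : ∀ y, fderiv ℝ φ y v = (κ ^ 2)⁻¹ * (-κ⁻¹ * fderiv ℝ ρ (κ⁻¹ • (x - y)) v) := by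
    intro y
    have h1 : HasFDerivAt (fun y : Fin 2 → ℝ => κ⁻¹ • (x - y))
        (κ⁻¹ • (-ContinuousLinearMap.id ℝ (Fin 2 → ℝ))) y :=
      ((hasFDerivAt_id y).const_sub x).const_smul κ⁻¹
    have h2 := ((hρ.differentiable (by simp)) (κ⁻¹ • (x - y))).hasFDerivAt
    have h3 := (h2.comp y h1).const_mul (κ ^ 2)⁻¹
    have h4 : fderiv ℝ φ y = _ := h3.fderiv
    rw [h4]
    simp
  have hld : ∀ y, |lineDeriv ℝ (fun y => h y - h x) y v| ≤ M := by
    intro y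
    have := norm_lineDeriv_le_of_lipschitz ℝ (v := v) (x₀ := y) hH
    simpa [hvn, hM] using this
  have hg1 : Continuous fun y => fderiv ℝ g y v :=
    (hg.continuous_fderiv (by simp)).clm_apply continuous_const
  have hgc1 : HasCompactSupport fun y => fderiv ℝ g y v := hgc.fderiv_apply ℝ v
  have hφc := hφ.continuous
  have hhc := hh.continuous
  have e : mollify ρ κ (fun y => h y * pd2 α g y) x - h x * mollify ρ κ (pd2 α g) x
      = ∫ y, φ y * ((h y - h x) * fderiv ℝ g y v) := by
    have i1 : Integrable fun y => φ y * (h y * fderiv ℝ g y v) :=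
      Continuous.integrable_of_hasCompactSupport (by fun_prop) (hgc1.mul_left.mul_left)
    have i2 : Integrable fun y => h x * (φ y * fderiv ℝ g y v) :=
      Continuous.integrable_of_hasCompactSupport (by fun_prop) (hgc1.mul_left.mul_left)
    have : (fun y => φ y * ((h y - h x) * fderiv ℝ g y v)) = fun y =>
      φ y * (h y * fderiv ℝ g y v) - h x * (φ y * fderiv ℝ g y v) := by ext y; ring
    rw [this, integral_sub i1 i2, integral_const_mul]
    rfl
  rw [e, fc_parts φ g _ hφ hg hgc _ hH v, enorm_neg]
  refine (enorm_integral_le_lintegral_enorm _).trans (lintegral_mono fun y => ?_)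
  rw [enorm_mul]
  gcongr
  rw [Real.enorm_eq_ofReal_abs]
  refine ENNReal.ofReal_le_ofReal ?_
  refine (abs_add_le _ _).trans ?_
  have a1 : |(κ ^ 2)⁻¹| = (κ ^ 2)⁻¹ := abs_of_pos (by positivity)
  have a2 : |κ⁻¹| = κ⁻¹ := abs_of_pos (by positivity)
  have a3 : |φ y| = φ y := abs_of_nonneg (mul_nonneg (by positivity) (hρnn _))
  have a4 : |h y - h x| ≤ M * ‖x - y‖ := by
    have := hh.dist_le_mul y x
    rw [Real.dist_eq, Real.coe_toNNReal _ hM, dist_comm, dist_eq_norm] at this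
    exact this
  have a5 : |fderiv ℝ ρ (κ⁻¹ • (x - y)) v| ≤ ‖fderiv ℝ ρ (κ⁻¹ • (x - y))‖ := by
    have := (fderiv ℝ ρ (κ⁻¹ • (x - y))).le_opNorm v
    simpa [hvn] using this
  rw [abs_mul _ (φ y), abs_mul (h y - h x), a3, hd, abs_mul (κ ^ 2)⁻¹, abs_mul (-κ⁻¹), abs_neg, a1, a2, norm_smul,
    Real.norm_eq_abs, a2]
  calc _ ≤ M * φ y + M * ‖x - y‖ * ((κ ^ 2)⁻¹ * (κ⁻¹ * ‖fderiv ℝ ρ (κ⁻¹ • (x - y))‖)) := by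
        gcongr
        · rw [← a3]; positivity
        · exact hld y
    _ = _ := by simp only [hφd]; ring

/-- **Friedrichs-type commutator estimate for the horizontal mollifier.** There is a constant
`C > 0`, depending only on the mollifying kernel `ρ` (smooth, nonnegative, supported in the
closed Euclidean unit ball, of integral one), such that for every `κ > 0`, every bounded
Lipschitz `h` (sup norm and Lipschitz constant both at most `M`), every smooth compactly
supported `g` and every coordinate direction `α`,
`‖Λ_κ (h ∂_α g) − h Λ_κ (∂_α g)‖_{L²} ≤ C M ‖g‖_{L²}`, uniformly in `κ`. -/
theorem friedrichs_commutator
    (ρ : (Fin 2 → ℝ) → ℝ) (hρ : ContDiff ℝ (⊤ : ℕ∞) ρ) (hρnn : ∀ x, 0 ≤ ρ x)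
    (hρsupp : tsupport ρ ⊆ {x : Fin 2 → ℝ | ∑ i : Fin 2, x i ^ 2 ≤ 1})
    (hρint : ∫ x, ρ x = 1) :
    ∃ C > 0, ∀ κ > (0 : ℝ), ∀ (M : ℝ) (h : (Fin 2 → ℝ) → ℝ),
      (∀ x, |h x| ≤ M) → LipschitzWith (Real.toNNReal M) h →
      ∀ g : (Fin 2 → ℝ) → ℝ, ContDiff ℝ (⊤ : ℕ∞) g → HasCompactSupport g →
      ∀ α : Fin 2,
        eLpNorm (fun x => mollify ρ κ (fun y => h y * pd2 α g y) x
            - h x * mollify ρ κ (pd2 α g) x) 2 volume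
          ≤ ENNReal.ofReal (C * M) * eLpNorm g 2 volume := by
  have hρc : HasCompactSupport ρ := by
    refine HasCompactSupport.of_support_subset_isCompact (K := Metric.closedBall 0 1)
      (isCompact_closedBall 0 1) ?_
    intro z hz
    have h1 : ∑ i : Fin 2, z i ^ 2 ≤ 1 := hρsupp (subset_tsupport _ hz)
    rw [mem_closedBall_zero_iff, pi_norm_le_iff_of_nonneg zero_le_one]
    intro i
    rw [Real.norm_eq_abs, ← sq_le_one_iff_abs_le_one]
    exact (Finset.single_le_sum (f := fun i => z i ^ 2) (fun j _ => sq_nonneg (z j))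
      (Finset.mem_univ i)).trans h1
  have hρcont := hρ.continuous
  have hD : Continuous fun z => fderiv ℝ ρ z := hρ.continuous_fderiv (by simp)
  have i1 : Integrable ρ := hρcont.integrable_of_hasCompactSupport hρc
  have i2 : Integrable fun z => ‖z‖ * ‖fderiv ℝ ρ z‖ :=
    Continuous.integrable_of_hasCompactSupport (by fun_prop) ((hρc.fderiv ℝ).norm.mul_left)
  set K : (Fin 2 → ℝ) → ℝ := fun z => ‖z‖ * ‖fderiv ℝ ρ z‖ + ρ z with hK
  have hKc : Continuous K := by fun_prop
  have hK0 : ∀ z, 0 ≤ K z := fun z => add_nonneg (by positivity) (hρnn z)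
  have hKi : Integrable K := i2.add i1
  have hC : 0 < ∫ z, K z := by
    have : ∫ z, ρ z ≤ ∫ z, K z :=
      integral_mono i1 hKi fun z => le_add_of_nonneg_left (by positivity)
    linarith
  refine ⟨∫ z, K z, hC, ?_⟩
  intro κ hκ M h hb hL g hg hgc α
  have hM : 0 ≤ M := (abs_nonneg _).trans (hb 0)
  set Kκ : (Fin 2 → ℝ) → ℝ≥0∞ := fun z => ENNReal.ofReal (M * ((κ ^ 2)⁻¹ * K (κ⁻¹ • z)))
  have hKm : Measurable Kκ := by
    refine Measurable.ennreal_ofReal (Continuous.measurable ?_)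
    fun_prop
  have hgm : Measurable fun y => ‖g y‖ₑ := hg.continuous.measurable.enorm
  have hKint : ∫⁻ z, Kκ z = ENNReal.ofReal ((∫ z, K z) * M) := by
    have : ∀ z, Kκ z = ENNReal.ofReal M * ENNReal.ofReal ((κ ^ 2)⁻¹ * K (κ⁻¹ • z)) :=
      fun z => ENNReal.ofReal_mul hM
    simp only [this]
    rw [lintegral_const_mul' _ _ ENNReal.ofReal_ne_top, fc_kernel_int K hK0 hKi κ hκ,
      ← ENNReal.ofReal_mul hM, mul_comm]
  rw [eLpNorm_eq_lintegral_rpow_enorm_toReal (by norm_num) (by norm_num),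
    eLpNorm_eq_lintegral_rpow_enorm_toReal (by norm_num) (by norm_num)]
  simp only [ENNReal.toReal_ofNat]
  have main := fc_young Kκ (fun y => ‖g y‖ₑ) hKm hgm
  rw [hKint] at main
  calc _ ≤ (ENNReal.ofReal ((∫ z, K z) * M) ^ (2 : ℝ) * ∫⁻ y, ‖g y‖ₑ ^ (2 : ℝ)) ^ (1 / 2 : ℝ) := by
        refine ENNReal.rpow_le_rpow (le_trans (lintegral_mono fun x => ?_) main) (by norm_num)
        exact ENNReal.rpow_le_rpow
          (fc_pointwise ρ hρ hρnn κ hκ M hM h hL g hg hgc α x) (by norm_num)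
    _ = _ := by
        rw [ENNReal.mul_rpow_of_nonneg _ _ (by norm_num), ← ENNReal.rpow_mul]
        norm_num
end

section
/- Moser-type symmetric commutator estimate: For every natural number k ≥ 2 there is a constant C such that for all smooth compactly supported functions g, h : ℝ³ → ℝ and every multi-index α with |α| = k, the symmetric commutator [∂^α, g, h] := ∂^α(g·h) − (∂^α g)·h − g·∂^α h satisfies ‖[∂^α, g, h]‖_{L²(ℝ³)} ≤ C ( ‖∇g‖_{H^{k−2}} · ‖∇h‖_{H^{⌊(k−2)/2⌋+2}} + ‖∇g‖_{H^{⌊(k−2)/2⌋+2}} · ‖∇h‖_{H^{k−2}} ), where ‖∇g‖_{H^m} denotes the sum of the H^m norms of the three first-order partial derivatives of g. -/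
open MeasureTheory

/-- The partial derivative in the `i`-th coordinate direction on `ℝ³`. -/
noncomputable def pd3 (i : Fin 3) (f : (Fin 3 → ℝ) → ℝ) : (Fin 3 → ℝ) → ℝ :=
  fun x => fderiv ℝ f x (Pi.single i 1)

/-- The iterated partial derivative `∂^α = ∂₁^{α 0} ∂₂^{α 1} ∂₃^{α 2}` on `ℝ³`
associated with a multi-index `α : Fin 3 → ℕ`. -/
noncomputable def mderiv (α : Fin 3 → ℕ) (f : (Fin 3 → ℝ) → ℝ) : (Fin 3 → ℝ) → ℝ :=
  (pd3 0)^[α 0] ((pd3 1)^[α 1] ((pd3 2)^[α 2] f))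

/-- The `H^m (ℝ³)` norm: the sum over `0 ≤ j ≤ m` of the `L²` norms of the `j`-th iterated
total derivatives. -/
noncomputable def Hnorm (m : ℕ) (f : (Fin 3 → ℝ) → ℝ) : ℝ :=
  ∑ j ∈ Finset.range (m + 1),
    (eLpNorm (fun x => ‖iteratedFDeriv ℝ j f x‖) 2 volume).toReal

/-- The `H^m` norm of the gradient: the sum of the `H^m` norms of the three first-order
partial derivatives. -/
noncomputable def gradHnorm (m : ℕ) (f : (Fin 3 → ℝ) → ℝ) : ℝ :=
  ∑ i : Fin 3, Hnorm m (pd3 i f)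

open scoped SchwartzMap FourierTransform LineDeriv ENNReal

/-- Fourier-side weight is square integrable. -/
lemma weight_memLp : MemLp (fun x : EuclideanSpace ℝ (Fin 3) ↦ ((1 + ‖x‖ ^ 2)⁻¹ : ℝ)) 2 := by
  have hc : Continuous (fun x : EuclideanSpace ℝ (Fin 3) ↦ ((1 + ‖x‖ ^ 2)⁻¹ : ℝ)) :=
    Continuous.inv₀ (by fun_prop) (fun x => by positivity)
  rw [memLp_two_iff_integrable_sq hc.aestronglyMeasurable]
  have h := integrable_rpow_neg_one_add_norm_sq (E := EuclideanSpace ℝ (Fin 3)) (μ := volume)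
    (r := 4) (by simp; norm_num)
  refine h.congr (Filter.Eventually.of_forall fun x => ?_)
  have : (-4 / 2 : ℝ) = -((2 : ℕ) : ℝ) := by norm_num
  simp only
  rw [this, Real.rpow_neg (by positivity), Real.rpow_natCast, inv_pow]

lemma schwartz_fourier_dd (F : 𝓢(EuclideanSpace ℝ (Fin 3), ℂ)) (m ξ : EuclideanSpace ℝ (Fin 3)) :
    𝓕 (∂_{m} (∂_{m} F)) ξ = (-(4 * Real.pi ^ 2) * (inner ℝ ξ m) ^ 2 : ℝ) * 𝓕 F ξ := by
  have ht : (fun x : EuclideanSpace ℝ (Fin 3) => inner ℝ x m).HasTemperateGrowth :=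
    ((innerSL ℝ).flip m).hasTemperateGrowth
  rw [SchwartzMap.fourier_lineDerivOp_eq, SchwartzMap.fourier_lineDerivOp_eq]
  simp only [smul_apply, SchwartzMap.smulLeftCLM_apply_apply ht, smul_eq_mul,
    Complex.real_smul]
  push_cast
  linear_combination (4 * (Real.pi : ℂ) ^ 2 * (inner ℝ ξ m : ℝ) ^ 2 * 𝓕 F ξ) * Complex.I_sq

lemma schwartz_sobolev : ∃ K : ℝ, 0 ≤ K ∧ ∀ (F : 𝓢(EuclideanSpace ℝ (Fin 3), ℂ)) x,
    ‖F x‖ ≤ K * (‖F.toLp 2‖ + ∑ i : Fin 3,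
      ‖(∂_{EuclideanSpace.single i (1 : ℝ)} (∂_{EuclideanSpace.single i (1 : ℝ)} F)).toLp 2‖) := by
  set w := (fun x : EuclideanSpace ℝ (Fin 3) ↦ ((1 + ‖x‖ ^ 2)⁻¹ : ℝ)) with hw
  refine ⟨(eLpNorm w 2 volume).toReal, ENNReal.toReal_nonneg, fun F x => ?_⟩
  set c : ℝ := (4 * Real.pi ^ 2)⁻¹ with hc
  have hc0 : 0 ≤ c := by positivity
  have hc1 : c ≤ 1 := by
    rw [hc]; apply inv_le_one_of_one_le₀; nlinarith [Real.pi_gt_three]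
  set T : Fin 3 → 𝓢(EuclideanSpace ℝ (Fin 3), ℂ) := fun i =>
    ∂_{EuclideanSpace.single i (1 : ℝ)} (∂_{EuclideanSpace.single i (1 : ℝ)} F) with hT
  set G : 𝓢(EuclideanSpace ℝ (Fin 3), ℂ) := F - (c : ℂ) • ∑ i, T i with hG
  have hFG : ∀ ξ, 𝓕 G ξ = ((1 + ‖ξ‖ ^ 2 : ℝ) : ℂ) * 𝓕 F ξ := by
    intro ξ
    have h1 : 𝓕 G = 𝓕 F - (c : ℂ) • ∑ i, 𝓕 (T i) := by
      simp only [← SchwartzMap.fourierTransformCLM_apply ℂ, hG, map_sub, map_smul, map_sum]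
    have h2 : ∀ i, 𝓕 (T i) ξ = (-(4 * Real.pi ^ 2) * (ξ i) ^ 2 : ℝ) * 𝓕 F ξ := by
      intro i
      rw [hT]
      simp only [schwartz_fourier_dd, EuclideanSpace.inner_single_right]
      simp
    rw [h1, EuclideanSpace.real_norm_sq_eq]
    simp only [sub_apply, smul_apply, h2, hc, Pi.add_apply,
      Fin.sum_univ_three, add_apply]
    have := Real.pi_ne_zero
    have : (Real.pi : ℂ) ≠ 0 := by exact_mod_cast this
    push_cast
    simp only [smul_eq_mul]
    field_simp
    ring
  have hFx : ‖F x‖ ≤ ‖(𝓕 F).toLp 1‖ := by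
    have h := SchwartzMap.norm_fourier_apply_le_toLp_one (𝓕 F) (-x)
    have h2 : F x = 𝓕 (𝓕 F) (-x) := by
      conv_lhs => rw [← FourierTransform.fourierInv_fourier_eq (F := 𝓢(EuclideanSpace ℝ (Fin 3), ℂ)) F]
      rw [SchwartzMap.fourierInv_apply_eq]
      rfl
    rw [h2]; exact h
  have hH : ‖(𝓕 F).toLp 1‖ ≤ (eLpNorm w 2 volume).toReal * ‖(𝓕 G).toLp 2‖ := by
    rw [SchwartzMap.norm_toLp, SchwartzMap.norm_toLp, ← ENNReal.toReal_mul]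
    apply ENNReal.toReal_mono
      (ENNReal.mul_ne_top weight_memLp.2.ne ((𝓕 G).memLp 2 volume).2.ne)
    have : ⇑(𝓕 F : 𝓢(EuclideanSpace ℝ (Fin 3), ℂ)) =
        w • ⇑(𝓕 G : 𝓢(EuclideanSpace ℝ (Fin 3), ℂ)) := by
      ext ξ
      have : (1 + (‖ξ‖ : ℂ) ^ 2) ≠ 0 := by
        have : (1 + ‖ξ‖ ^ 2 : ℝ) ≠ 0 := by positivity
        exact_mod_cast this
      simp only [Pi.smul_apply', hFG, hw, Complex.real_smul]
      push_cast
      field_simp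
    rw [this]
    exact eLpNorm_smul_le_mul_eLpNorm (𝓕 G).continuous.aestronglyMeasurable
      weight_memLp.1
  have hGn : ‖G.toLp 2‖ ≤ ‖F.toLp 2‖ + ∑ i, ‖(T i).toLp 2‖ := by
    have : G.toLp 2 volume = F.toLp 2 volume - (c : ℂ) • ∑ i, (T i).toLp 2 volume := by
      simp only [← SchwartzMap.toLpCLM_apply (𝕜 := ℂ), hG, map_sub, map_smul, map_sum]
    rw [this]
    refine (norm_sub_le _ _).trans (add_le_add_right ?_ _)
    rw [norm_smul]
    calc _ ≤ 1 * ‖∑ i, (T i).toLp 2‖ := by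
          gcongr
          rw [Complex.norm_real, Real.norm_of_nonneg hc0]; exact hc1
      _ ≤ _ := by rw [one_mul]; exact norm_sum_le _ _
  calc _ ≤ _ := hFx
    _ ≤ _ := hH
    _ ≤ _ := by
      rw [SchwartzMap.norm_fourier_toL2_eq]
      gcongr

/-- Test functions. -/
def IsTest (f : (Fin 3 → ℝ) → ℝ) : Prop := ContDiff ℝ (⊤ : ℕ∞) f ∧ HasCompactSupport f

/-- The real `L²` norm. -/
noncomputable def l2 (f : (Fin 3 → ℝ) → ℝ) : ℝ := (eLpNorm f 2 volume).toReal

lemma l2_nonneg (f : (Fin 3 → ℝ) → ℝ) : 0 ≤ l2 f := ENNReal.toReal_nonneg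

lemma IsTest.pd {f : (Fin 3 → ℝ) → ℝ} (hf : IsTest f) (i : Fin 3) : IsTest (pd3 i f) := by
  refine ⟨?_, hf.2.fderiv_apply (𝕜 := ℝ) _⟩
  exact (hf.1.fderiv_right (m := (⊤ : ℕ∞)) (by simp)).clm_apply contDiff_const

lemma IsTest.memLp {f : (Fin 3 → ℝ) → ℝ} (hf : IsTest f) : MemLp f 2 volume :=
  hf.1.continuous.memLp_of_hasCompactSupport hf.2

/-- Transfer to a Schwartz function on Euclidean space. -/
noncomputable def toS (f : (Fin 3 → ℝ) → ℝ) (hf : IsTest f) :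
    𝓢(EuclideanSpace ℝ (Fin 3), ℂ) :=
  HasCompactSupport.toSchwartzMap
    (f := fun x : EuclideanSpace ℝ (Fin 3) => (f (EuclideanSpace.equiv (Fin 3) ℝ x) : ℂ))
    ((hf.2.comp_homeomorph (EuclideanSpace.equiv (Fin 3) ℝ).toHomeomorph).comp_left
      (g := fun r : ℝ => (r : ℂ)) (by simp))
    (Complex.ofRealCLM.contDiff.comp (hf.1.comp (EuclideanSpace.equiv (Fin 3) ℝ).contDiff))

lemma toS_apply (f : (Fin 3 → ℝ) → ℝ) (hf : IsTest f) (x : EuclideanSpace ℝ (Fin 3)) :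
    toS f hf x = (f (EuclideanSpace.equiv (Fin 3) ℝ x) : ℂ) := rfl

lemma toS_pd (f : (Fin 3 → ℝ) → ℝ) (hf : IsTest f) (i : Fin 3) :
    ∂_{EuclideanSpace.single i (1 : ℝ)} (toS f hf) = toS (pd3 i f) (hf.pd i) := by
  ext x
  rw [SchwartzMap.lineDerivOp_apply_eq_fderiv, toS_apply]
  have h1 : HasFDerivAt f (fderiv ℝ f (EuclideanSpace.equiv (Fin 3) ℝ x))
      (EuclideanSpace.equiv (Fin 3) ℝ x) :=
    ((hf.1.differentiable (by simp)) _).hasFDerivAt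
  have h2 := Complex.ofRealCLM.hasFDerivAt.comp x
    (h1.comp x (EuclideanSpace.equiv (Fin 3) ℝ).hasFDerivAt)
  have h3 : HasFDerivAt (toS f hf) _ x := h2
  rw [h3.fderiv]
  simp only [ContinuousLinearMap.comp_apply, Complex.ofRealCLM_apply, pd3]
  rfl

lemma toS_norm (f : (Fin 3 → ℝ) → ℝ) (hf : IsTest f) : ‖(toS f hf).toLp 2‖ = l2 f := by
  rw [SchwartzMap.norm_toLp, l2, ← eLpNorm_comp_measurePreserving
    hf.1.continuous.aestronglyMeasurable (PiLp.volume_preserving_ofLp (Fin 3))]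
  congr 1
  apply eLpNorm_congr_norm_ae
  filter_upwards with x
  rw [toS_apply, Complex.norm_real]
  rfl

lemma sobolev_sup : ∃ K : ℝ, 0 ≤ K ∧ ∀ f : (Fin 3 → ℝ) → ℝ, IsTest f → ∀ x,
    |f x| ≤ K * (l2 f + ∑ i : Fin 3, l2 (pd3 i (pd3 i f))) := by
  obtain ⟨K, hK, h⟩ := schwartz_sobolev
  refine ⟨K, hK, fun f hf x => ?_⟩
  have := h (toS f hf) ((EuclideanSpace.equiv (Fin 3) ℝ).symm x)
  simp only [toS_pd, toS_norm] at this
  rw [toS_apply, Complex.norm_real, ContinuousLinearEquiv.apply_symm_apply] at this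
  exact this

/-- Iterated partial derivatives along a word. -/
noncomputable def wd (w : List (Fin 3)) (f : (Fin 3 → ℝ) → ℝ) : (Fin 3 → ℝ) → ℝ := w.foldr pd3 f

lemma wd_cons (i : Fin 3) (w : List (Fin 3)) (f : (Fin 3 → ℝ) → ℝ) :
    wd (i :: w) f = pd3 i (wd w f) := rfl

lemma wd_nil (f : (Fin 3 → ℝ) → ℝ) : wd [] f = f := rfl

lemma wd_append (u v : List (Fin 3)) (f : (Fin 3 → ℝ) → ℝ) :
    wd (u ++ v) f = wd u (wd v f) := by simp [wd]

lemma wd_replicate (n : ℕ) (i : Fin 3) (f : (Fin 3 → ℝ) → ℝ) :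
    wd (List.replicate n i) f = (pd3 i)^[n] f := by
  induction n with
  | zero => rfl
  | succ n ih => rw [List.replicate_succ, wd_cons, ih, Function.iterate_succ_apply']

lemma IsTest.wd {f : (Fin 3 → ℝ) → ℝ} (hf : IsTest f) (w : List (Fin 3)) : IsTest (wd w f) := by
  induction w with
  | nil => exact hf
  | cons i w ih => exact ih.pd i

lemma mderiv_eq (α : Fin 3 → ℕ) : ∃ w : List (Fin 3), w.length = α 0 + α 1 + α 2 ∧
    ∀ f, mderiv α f = wd w f := by
  refine ⟨List.replicate (α 0) 0 ++ (List.replicate (α 1) 1 ++ List.replicate (α 2) 2), ?_, ?_⟩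
  · simp [add_assoc]
  · intro f
    simp only [wd_append, wd_replicate, mderiv]

lemma wd_eq_iterated {f : (Fin 3 → ℝ) → ℝ} (hf : IsTest f) (w : List (Fin 3)) :
    ∃ m : Fin w.length → (Fin 3 → ℝ), (∀ j, ‖m j‖ ≤ 1) ∧
      ∀ x, wd w f x = iteratedFDeriv ℝ w.length f x m := by
  induction w with
  | nil => exact ⟨fun _ => 0, fun j => by simp, fun x => by simp [wd_nil]⟩
  | cons i w ih =>
    obtain ⟨m, hm, h⟩ := ih
    refine ⟨Fin.cons (Pi.single i 1) m, ?_, fun x => ?_⟩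
    · intro j
      refine Fin.cases ?_ (fun j => ?_) j
      · simp [Pi.norm_single]
      · simpa using hm j
    · have hd : DifferentiableAt ℝ (iteratedFDeriv ℝ w.length f) x :=
        (hf.1.differentiable_iteratedFDeriv (by exact_mod_cast ENat.natCast_lt_top _)) x
      have := hd.iteratedFDeriv_succ_apply_left' (m := Fin.cons (Pi.single i 1) m)
      refine Eq.trans ?_ this.symm
      rw [wd_cons, pd3]
      have h2 : wd w f = fun y => iteratedFDeriv ℝ w.length f y m := funext h
      rw [h2]
      rfl

lemma abs_wd_le {f : (Fin 3 → ℝ) → ℝ} (hf : IsTest f) (w : List (Fin 3)) (x : Fin 3 → ℝ) :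
    |wd w f x| ≤ ‖iteratedFDeriv ℝ w.length f x‖ := by
  obtain ⟨m, hm, h⟩ := wd_eq_iterated hf w
  rw [h, ← Real.norm_eq_abs]
  refine (ContinuousMultilinearMap.le_opNorm _ _).trans ?_
  refine mul_le_of_le_one_right (norm_nonneg _) ?_
  exact Finset.prod_le_one (fun _ _ => norm_nonneg _) (fun j _ => hm j)

lemma l2_wd_le_Hnorm {f : (Fin 3 → ℝ) → ℝ} (hf : IsTest f) (w : List (Fin 3)) (M : ℕ)
    (hM : w.length ≤ M) : l2 (wd w f) ≤ Hnorm M f := by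
  have hc : Continuous (fun x => iteratedFDeriv ℝ w.length f x) :=
    hf.1.continuous_iteratedFDeriv (by exact_mod_cast le_top)
  have h1 : l2 (wd w f)
      ≤ (eLpNorm (fun x => ‖iteratedFDeriv ℝ w.length f x‖) 2 volume).toReal := by
    apply ENNReal.toReal_mono
    · exact (hc.norm.memLp_of_hasCompactSupport (hf.2.iteratedFDeriv (𝕜 := ℝ) _).norm).2.ne
    · exact eLpNorm_mono_real (fun x => abs_wd_le hf w x)
  refine h1.trans ?_
  rw [Hnorm]
  exact Finset.single_le_sum
    (f := fun j => (eLpNorm (fun x => ‖iteratedFDeriv ℝ j f x‖) 2 volume).toReal)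
    (fun _ _ => ENNReal.toReal_nonneg) (Finset.mem_range.2 (by omega))

lemma Hnorm_nonneg (m : ℕ) (f : (Fin 3 → ℝ) → ℝ) : 0 ≤ Hnorm m f :=
  Finset.sum_nonneg fun _ _ => ENNReal.toReal_nonneg

lemma gradHnorm_nonneg (m : ℕ) (f : (Fin 3 → ℝ) → ℝ) : 0 ≤ gradHnorm m f :=
  Finset.sum_nonneg fun _ _ => Hnorm_nonneg _ _

lemma l2_wd_le {f : (Fin 3 → ℝ) → ℝ} (hf : IsTest f) (w : List (Fin 3)) (M : ℕ)
    (h1 : 1 ≤ w.length) (hM : w.length ≤ M + 1) : l2 (wd w f) ≤ gradHnorm M f := by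
  have hne : w ≠ [] := by rintro rfl; simp at h1
  obtain ⟨u, i, rfl⟩ : ∃ u i, w = u ++ [i] := ⟨_, _, (List.dropLast_append_getLast hne).symm⟩
  rw [wd_append, wd_cons, wd_nil]
  refine (l2_wd_le_Hnorm (hf.pd i) u M (by simpa using hM)).trans ?_
  exact Finset.single_le_sum (f := fun i => Hnorm M (pd3 i f))
    (fun _ _ => Hnorm_nonneg _ _) (Finset.mem_univ i)

lemma sup_wd_le : ∃ K : ℝ, 0 ≤ K ∧ ∀ f : (Fin 3 → ℝ) → ℝ, IsTest f → ∀ (w : List (Fin 3)) (M : ℕ),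
    1 ≤ w.length → w.length + 1 ≤ M → ∀ x, |wd w f x| ≤ K * gradHnorm M f := by
  obtain ⟨K, hK, h⟩ := sobolev_sup
  refine ⟨K * 4, by positivity, fun f hf w M h1 hM x => ?_⟩
  refine (h _ (hf.wd w) x).trans ?_
  rw [mul_assoc]
  gcongr
  have a := l2_wd_le hf w M h1 (by omega)
  have b : ∀ i, l2 (pd3 i (pd3 i (wd w f))) ≤ gradHnorm M f := fun i =>
    l2_wd_le hf (i :: i :: w) M (by simp) (by simp; omega)
  rw [Fin.sum_univ_three]
  linarith [b 0, b 1, b 2]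

lemma l2_mul_le {a b : (Fin 3 → ℝ) → ℝ} (hb : IsTest b) {A : ℝ} (hA : 0 ≤ A)
    (h : ∀ x, |a x| ≤ A) : l2 (fun x => a x * b x) ≤ A * l2 b := by
  have h1 : eLpNorm (fun x => a x * b x) 2 volume ≤ ENNReal.ofReal A * eLpNorm b 2 volume := by
    apply eLpNorm_le_mul_eLpNorm_of_ae_le_mul
    filter_upwards with x
    rw [norm_mul]
    exact mul_le_mul_of_nonneg_right (h x) (norm_nonneg _)
  have h2 := ENNReal.toReal_mono (ENNReal.mul_ne_top ENNReal.ofReal_ne_top hb.memLp.2.ne) h1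
  rwa [ENNReal.toReal_mul, ENNReal.toReal_ofReal hA] at h2

lemma pd3_mul {f g : (Fin 3 → ℝ) → ℝ} (hf : IsTest f) (hg : IsTest g) (i : Fin 3) :
    pd3 i (fun x => f x * g x) = fun x => pd3 i f x * g x + f x * pd3 i g x := by
  funext x
  have h1 := (hf.1.differentiable (by simp) x)
  have h2 := (hg.1.differentiable (by simp) x)
  simp only [pd3]
  rw [fderiv_fun_mul h1 h2]
  simp
  ring

lemma pd3_add {f g : (Fin 3 → ℝ) → ℝ} (hf : IsTest f) (hg : IsTest g) (i : Fin 3) :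
    pd3 i (fun x => f x + g x) = fun x => pd3 i f x + pd3 i g x := by
  funext x
  have h1 := (hf.1.differentiable (by simp) x)
  have h2 := (hg.1.differentiable (by simp) x)
  simp only [pd3]
  rw [fderiv_fun_add h1 h2]
  simp

lemma IsTest.mul {f g : (Fin 3 → ℝ) → ℝ} (hf : IsTest f) (hg : IsTest g) :
    IsTest (fun x => f x * g x) := ⟨hf.1.mul hg.1, hf.2.mul_right⟩

lemma IsTest.add {f g : (Fin 3 → ℝ) → ℝ} (hf : IsTest f) (hg : IsTest g) :
    IsTest (fun x => f x + g x) := ⟨hf.1.add hg.1, hf.2.add hg.2⟩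

lemma isTest_zero : IsTest (fun _ => 0) := ⟨contDiff_const, HasCompactSupport.zero⟩

/-- The sum of products of word derivatives over a list of pairs of words. -/
noncomputable def lsum (S : List (List (Fin 3) × List (Fin 3))) (g h : (Fin 3 → ℝ) → ℝ) :
    (Fin 3 → ℝ) → ℝ :=
  S.foldr (fun p r => fun x => wd p.1 g x * wd p.2 h x + r x) (fun _ => 0)

lemma lsum_cons (p : List (Fin 3) × List (Fin 3)) (S : List (List (Fin 3) × List (Fin 3)))
    (g h : (Fin 3 → ℝ) → ℝ) :
    lsum (p :: S) g h = fun x => wd p.1 g x * wd p.2 h x + lsum S g h x := rfl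

lemma isTest_lsum {g h : (Fin 3 → ℝ) → ℝ} (hg : IsTest g) (hh : IsTest h)
    (S : List (List (Fin 3) × List (Fin 3))) : IsTest (lsum S g h) := by
  induction S with
  | nil => exact isTest_zero
  | cons p S ih => exact ((hg.wd _).mul (hh.wd _)).add ih

lemma pd3_lsum {g h : (Fin 3 → ℝ) → ℝ} (hg : IsTest g) (hh : IsTest h) (i : Fin 3)
    (S : List (List (Fin 3) × List (Fin 3))) :
    pd3 i (lsum S g h) = lsum (S.flatMap fun p => [(i :: p.1, p.2), (p.1, i :: p.2)]) g h := by
  induction S with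
  | nil => funext x; simp [lsum, pd3]
  | cons p S ih =>
    rw [lsum_cons, pd3_add ((hg.wd _).mul (hh.wd _)) (isTest_lsum hg hh S),
      pd3_mul (hg.wd _) (hh.wd _), ih]
    funext x
    simp only [List.flatMap_cons, List.cons_append, List.nil_append, lsum_cons, wd_cons]
    ring

lemma leibniz (i : Fin 3) (w : List (Fin 3)) :
    ∃ S : List (List (Fin 3) × List (Fin 3)), S.length ≤ 2 ^ (w.length + 1) - 2 ∧
      (∀ p ∈ S, 1 ≤ p.1.length ∧ 1 ≤ p.2.length ∧ p.1.length + p.2.length = w.length + 1) ∧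
      ∀ g h, IsTest g → IsTest h → wd (i :: w) (fun y => g y * h y) =
        fun x => wd (i :: w) g x * h x + (g x * wd (i :: w) h x + lsum S g h x) := by
  induction w generalizing i with
  | nil =>
    refine ⟨[], by simp, by simp, fun g h hg hh => ?_⟩
    simp [wd_cons, wd_nil, pd3_mul hg hh, lsum]
  | cons j w ih =>
    obtain ⟨S, hS, hl, hf⟩ := ih j
    refine ⟨(j :: w, [i]) :: ([i], j :: w) ::
      S.flatMap fun p => [(i :: p.1, p.2), (p.1, i :: p.2)], ?_, ?_, ?_⟩
    · have h4 : 2 ≤ 2 ^ (w.length + 1) := by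
        rw [pow_succ]; have := Nat.one_le_two_pow (n := w.length); omega
      simp only [List.length_cons, List.length_flatMap, List.length_nil, List.map_const',
        List.sum_replicate, smul_eq_mul, pow_succ] at *
      omega
    · intro p hp
      simp only [List.mem_cons, List.mem_flatMap] at hp
      rcases hp with rfl | rfl | ⟨q, hq, hp⟩
      · simp
      · simp; omega
      · have := hl q hq
        rcases hp with rfl | rfl | hp
        · simp; omega
        · simp; omega
        · simp at hp
    · intro g h hg hh
      rw [wd_cons, hf g h hg hh, pd3_add ((hg.wd _).mul hh)
        ((hg.mul (hh.wd _)).add (isTest_lsum hg hh S)), pd3_mul (hg.wd _) hh,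
        pd3_add (hg.mul (hh.wd _)) (isTest_lsum hg hh S), pd3_mul hg (hh.wd _),
        pd3_lsum hg hh]
      funext x
      simp only [lsum_cons, wd_cons, wd_nil]
      ring

lemma l2_add_le {f g : (Fin 3 → ℝ) → ℝ} (hf : IsTest f) (hg : IsTest g) :
    l2 (fun x => f x + g x) ≤ l2 f + l2 g := by
  have h := eLpNorm_add_le hf.memLp.1 hg.memLp.1 (p := 2) (by norm_num)
  have h2 := ENNReal.toReal_mono (ENNReal.add_ne_top.2 ⟨hf.memLp.2.ne, hg.memLp.2.ne⟩) h
  rwa [ENNReal.toReal_add hf.memLp.2.ne hg.memLp.2.ne] at h2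

lemma l2_lsum_le {g h : (Fin 3 → ℝ) → ℝ} (hg : IsTest g) (hh : IsTest h) (B : ℝ)
    (S : List (List (Fin 3) × List (Fin 3)))
    (hS : ∀ p ∈ S, l2 (fun x => wd p.1 g x * wd p.2 h x) ≤ B) :
    l2 (lsum S g h) ≤ S.length * B := by
  induction S with
  | nil => simp [lsum, l2]
  | cons p S ih =>
    rw [lsum_cons]
    refine (l2_add_le ((hg.wd _).mul (hh.wd _)) (isTest_lsum hg hh S)).trans ?_
    have h1 := hS p (by simp)
    have h2 := ih (fun q hq => hS q (by simp [hq]))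
    simp only [List.length_cons]
    push_cast
    linarith

/-- **Moser-type symmetric commutator estimate.** For every `k ≥ 2` there is a constant
`C > 0` such that for all smooth compactly supported `g h : ℝ³ → ℝ` and every multi-index `α`
with `|α| = k`, the symmetric commutator `[∂^α, g, h] = ∂^α (g h) − (∂^α g) h − g ∂^α h`
satisfies
`‖[∂^α, g, h]‖_{L²} ≤ C (‖∇g‖_{H^{k−2}} ‖∇h‖_{H^{⌊(k−2)/2⌋+2}} + ‖∇g‖_{H^{⌊(k−2)/2⌋+2}} ‖∇h‖_{H^{k−2}})`. -/
theorem moser_symmetric_commutator (k : ℕ) (hk : 2 ≤ k) :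
    ∃ C > 0, ∀ g h : (Fin 3 → ℝ) → ℝ,
      ContDiff ℝ (⊤ : ℕ∞) g → HasCompactSupport g → ContDiff ℝ (⊤ : ℕ∞) h → HasCompactSupport h →
      ∀ α : Fin 3 → ℕ, α 0 + α 1 + α 2 = k →
        (eLpNorm (fun x => mderiv α (fun y => g y * h y) x
              - mderiv α g x * h x - g x * mderiv α h x) 2 volume).toReal
          ≤ C * (gradHnorm (k - 2) g * gradHnorm ((k - 2) / 2 + 2) h
              + gradHnorm ((k - 2) / 2 + 2) g * gradHnorm (k - 2) h) := by
  obtain ⟨K, hK, hsup⟩ := sup_wd_le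
  refine ⟨2 ^ k * (K + 1), by positivity, fun g h hg1 hg2 hh1 hh2 α hα => ?_⟩
  have hg : IsTest g := ⟨hg1, hg2⟩
  have hh : IsTest h := ⟨hh1, hh2⟩
  obtain ⟨w, hw, hm⟩ := mderiv_eq α
  obtain ⟨i, w, rfl⟩ : ∃ i u, w = i :: u := by
    cases w with
    | nil => simp at hw; omega
    | cons i u => exact ⟨i, u, rfl⟩
  obtain ⟨S, hSl, hS, hL⟩ := leibniz i w
  have hlen : w.length + 1 = k := by rw [← hα, ← hw]; simp
  have heq : (fun x => mderiv α (fun y => g y * h y) x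
      - mderiv α g x * h x - g x * mderiv α h x) = lsum S g h := by
    funext x
    rw [hm, hm, hm, hL g h hg hh]
    ring
  rw [heq]
  set M := (k - 2) / 2 + 2 with hM
  set B := gradHnorm (k - 2) g * gradHnorm M h + gradHnorm M g * gradHnorm (k - 2) h with hB
  have g1 := gradHnorm_nonneg (k - 2) g
  have g2 := gradHnorm_nonneg (k - 2) h
  have g3 := gradHnorm_nonneg M g
  have g4 := gradHnorm_nonneg M h
  have m1 := mul_nonneg g1 g4
  have m2 := mul_nonneg g3 g2
  have hB0 : 0 ≤ B := add_nonneg m1 m2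
  have key : ∀ p ∈ S, l2 (fun x => wd p.1 g x * wd p.2 h x) ≤ (K + 1) * B := by
    intro p hp
    obtain ⟨h1, h2, h3⟩ := hS p hp
    rcases le_total p.1.length p.2.length with hle | hle
    · have a := l2_mul_le (hh.wd p.2) (mul_nonneg hK g3)
        (hsup g hg p.1 M h1 (by omega))
      have b := l2_wd_le hh p.2 (k - 2) h2 (by omega)
      have c := mul_le_mul_of_nonneg_left b (mul_nonneg hK g3)
      have d := mul_nonneg hK m1
      rw [hB]; nlinarith
    · have a := l2_mul_le (hg.wd p.1) (mul_nonneg hK g4)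
        (hsup h hh p.2 M h2 (by omega))
      have b := l2_wd_le hg p.1 (k - 2) h1 (by omega)
      have c := mul_le_mul_of_nonneg_left b (mul_nonneg hK g4)
      have d := mul_nonneg hK m2
      simp only [mul_comm (wd p.1 g _)]
      rw [hB]; nlinarith
  have hfin := l2_lsum_le hg hh _ S key
  have hSk : (S.length : ℝ) ≤ 2 ^ k := by
    have : S.length ≤ 2 ^ k := hlen ▸ (hSl.trans (Nat.sub_le _ _))
    exact_mod_cast this
  calc _ ≤ _ := hfin
    _ ≤ 2 ^ k * ((K + 1) * B) := by gcongr
    _ = _ := by ring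
end
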